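/- Let n ≥ 2 and let η ∈ Γ₂ ⊂ ℝⁿ. Define the n×n real symmetric matrix A(η) by A_{ij} = σ₂(η)^{−2}·σ₁(η|i)·σ₁(η|j) − (1−δ_{ij})·σ₂(η)^{−1}. Then A(η) is positive definite; in particular its smallest eigenvalue is strictly positive. (This expresses the concavity of log σ₂ on Γ₂ in the diagonal directions, together with det A(η) = (n−1)σ₂(η)^{−n} > 0.) -/

import Mathlib

open Finset

/-- The `k`-th elementary symmetric polynomial of `η : Fin n → ℝ`. -/
noncomputable def sigmaE (n k : ℕ) (η : Fin n → ℝ) : ℝ :=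
  ∑ s ∈ Finset.univ.powersetCard k, ∏ i ∈ s, η i

/-- `σ₁(η|i) = ∑_{j ≠ i} η j`. -/
noncomputable def sigma1rest (n : ℕ) (η : Fin n → ℝ) (i : Fin n) : ℝ :=
  ∑ j ∈ Finset.univ.erase i, η j

/-- The Gårding cone `Γ₂`. -/
def Gamma2 (n : ℕ) (η : Fin n → ℝ) : Prop :=
  0 < sigmaE n 1 η ∧ 0 < sigmaE n 2 η

lemma two_sigma_aux {ι : Type*} [DecidableEq ι] (f : ι → ℝ) (t : Finset ι) :
    2 * ∑ s ∈ t.powersetCard 2, ∏ i ∈ s, f i = (∑ i ∈ t, f i) ^ 2 - ∑ i ∈ t, f i ^ 2 := by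
  induction t using Finset.induction_on with
  | empty => rw [Finset.powersetCard_eq_empty.2 (by simp)]; simp
  | insert a t ha ih =>
    rw [Finset.powersetCard_succ_insert ha, Finset.sum_union, Finset.sum_image, mul_add, ih,
      Finset.sum_insert ha, Finset.sum_insert ha]
    · have : ∑ s ∈ t.powersetCard 1, ∏ i ∈ insert a s, f i = f a * ∑ i ∈ t, f i := by
        rw [Finset.powersetCard_one, Finset.sum_map, Finset.mul_sum]
        refine Finset.sum_congr rfl fun i hi => ?_
        have : a ≠ i := fun h => ha (h ▸ hi)
        simp [Finset.prod_pair this]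
      rw [this]; ring
    · intro s hs u hu h
      have hs' : a ∉ s := fun h' => ha ((Finset.mem_powersetCard.1 hs).1 h')
      have hu' : a ∉ u := fun h' => ha ((Finset.mem_powersetCard.1 hu).1 h')
      rw [← Finset.erase_insert hs', ← Finset.erase_insert hu']
      exact congrArg (fun z => Finset.erase z a) h
    · rw [Finset.disjoint_left]
      intro s hs hs2
      obtain ⟨u, _, rfl⟩ := Finset.mem_image.1 hs2
      exact ha ((Finset.mem_powersetCard.1 hs).1 (Finset.mem_insert_self a u))

lemma key_ineq (s S X P Q E W : ℝ) (hs : 0 < s) (hS : 0 < S) (h2 : 2 * s = S ^ 2 - E)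
    (hQ : 0 < Q) (hCS : P ^ 2 ≤ E * Q) (hW : 0 ≤ W)
    (hWe : W = S ^ 2 * Q - 2 * S * X * P + X ^ 2 * E) :
    s * (X ^ 2 - Q) < (S * X - P) ^ 2 := by
  rcases lt_trichotomy (X ^ 2) Q with h | h | h
  · have : s * (X ^ 2 - Q) < 0 := mul_neg_of_pos_of_neg hs (by linarith)
    nlinarith [sq_nonneg (S * X - P)]
  · rw [h, sub_self, mul_zero]
    refine sq_pos_of_ne_zero fun h0 => ?_
    have h1 : P = S * X := by linarith
    have h3 : P ^ 2 = S ^ 2 * Q := by rw [h1, mul_pow, h]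
    nlinarith [mul_pos hs hQ]
  · have h1 : 0 ≤ S ^ 2 * ((S * X - P) ^ 2 - 2 * s * (X ^ 2 - Q)) := by
      have : S ^ 2 * ((S * X - P) ^ 2 - 2 * s * (X ^ 2 - Q))
          = 2 * s * W + (S * P - X * E) ^ 2 := by
        rw [hWe, h2]; ring
      rw [this]; positivity
    have h3 := nonneg_of_mul_nonneg_right h1 (by positivity)
    nlinarith [mul_pos hs (sub_pos.2 h)]

theorem stmt9 (n : ℕ) (hn : 2 ≤ n) (η : Fin n → ℝ) (hη : Gamma2 n η) :
    (Matrix.of fun i j : Fin n =>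
        (sigmaE n 2 η)⁻¹ ^ 2 * (sigma1rest n η i * sigma1rest n η j) -
          (if i = j then 0 else (sigmaE n 2 η)⁻¹)).PosDef := by
  obtain ⟨hS, hs⟩ := hη
  have h2 : 2 * sigmaE n 2 η = (∑ i, η i) ^ 2 - ∑ i, η i ^ 2 := two_sigma_aux η Finset.univ
  have hS' : 0 < ∑ i, η i := by
    simpa [sigmaE, Finset.powersetCard_one] using hS
  have hr : ∀ i, sigma1rest n η i = (∑ j, η j) - η i := fun i => by
    rw [sigma1rest, Finset.sum_erase_eq_sub (Finset.mem_univ i)]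
  generalize sigmaE n 2 η = s at *
  refine Matrix.PosDef.of_dotProduct_mulVec_pos ?_ ?_
  · ext i j
    simp [Matrix.conjTranspose_apply, mul_comm, eq_comm]
  · intro x hx
    have hQ : 0 < ∑ i, x i ^ 2 := by
      obtain ⟨i, hi⟩ := Function.ne_iff.1 hx
      exact Finset.sum_pos' (fun _ _ => sq_nonneg _) ⟨i, Finset.mem_univ _, sq_pos_of_ne_zero hi⟩
    have hCS := Finset.sum_mul_sq_le_sq_mul_sq Finset.univ η x
    have hW : 0 ≤ ∑ i, ((∑ j, η j) * x i - (∑ j, x j) * η i) ^ 2 :=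
      Finset.sum_nonneg fun _ _ => sq_nonneg _
    have hk := key_ineq s (∑ i, η i) (∑ i, x i) (∑ i, η i * x i) (∑ i, x i ^ 2) (∑ i, η i ^ 2) _
      hs hS' h2 hQ hCS hW (by
        generalize (∑ j, η j) = S
        generalize (∑ j, x j) = X
        simp only [Finset.mul_sum, ← Finset.sum_sub_distrib, ← Finset.sum_add_distrib]
        exact Finset.sum_congr rfl fun i _ => by ring)
    have hD : ∑ i, ((∑ j, η j) - η i) * x i
        = (∑ i, η i) * (∑ i, x i) - ∑ i, η i * x i := by
      rw [Finset.mul_sum, ← Finset.sum_sub_distrib]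
      exact Finset.sum_congr rfl fun i _ => by ring
    have hform : star x ⬝ᵥ (Matrix.of fun i j : Fin n =>
        s⁻¹ ^ 2 * (sigma1rest n η i * sigma1rest n η j) - (if i = j then 0 else s⁻¹)).mulVec x
        = s⁻¹ ^ 2 * ((∑ i, η i) * (∑ i, x i) - ∑ i, η i * x i) ^ 2
          - s⁻¹ * ((∑ i, x i) ^ 2 - ∑ i, x i ^ 2) := by
      rw [← hD]
      simp only [hr]
      generalize (∑ j, η j) = S
      have hrow : ∀ i, ∑ j, (s⁻¹ ^ 2 * ((S - η i) * (S - η j)) - (if i = j then 0 else s⁻¹)) * x j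
          = s⁻¹ ^ 2 * (S - η i) * (∑ j, (S - η j) * x j) - s⁻¹ * (∑ j, x j) + s⁻¹ * x i := by
        intro i
        have : s⁻¹ * x i = ∑ j, if i = j then s⁻¹ * x j else 0 := by simp
        rw [this, Finset.mul_sum, Finset.mul_sum, ← Finset.sum_sub_distrib,
          ← Finset.sum_add_distrib]
        refine Finset.sum_congr rfl fun j _ => ?_
        split_ifs <;> ring
      simp only [dotProduct, Matrix.mulVec, Matrix.of_apply, hrow, star_trivial, Pi.star_apply]
      generalize hd : (∑ j, (S - η j) * x j) = D
      generalize hX : (∑ j, x j) = X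
      have : s⁻¹ ^ 2 * D ^ 2 - s⁻¹ * (X ^ 2 - ∑ i, x i ^ 2)
          = s⁻¹ ^ 2 * D * (∑ j, (S - η j) * x j) - s⁻¹ * X * (∑ j, x j) + s⁻¹ * ∑ i, x i ^ 2 := by
        rw [hd, hX]; ring
      rw [this, Finset.mul_sum, Finset.mul_sum, Finset.mul_sum, ← Finset.sum_sub_distrib,
          ← Finset.sum_add_distrib]
      exact Finset.sum_congr rfl fun i _ => by ring
    rw [hform]
    have hp := mul_pos (pow_pos (inv_pos.2 hs) 2) (sub_pos.2 hk)
    have hss : s⁻¹ ^ 2 * s = s⁻¹ := by field_simp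
    rw [mul_sub, ← mul_assoc, hss] at hp
    exact hp
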